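/- Let n ≥ 1 be an integer, and define h₁(s) = (1+s)³/3 − 3(1+s)²/2 + 3(1+s) − log(1+s) − 11/6 for s ≥ 0. Suppose ṽ : {x ∈ ℝ^{n+4} : x_{n+4} ≥ 0} → ℝ is continuous, twice continuously differentiable on the open half-space ℝ^{n+4}₊, satisfies −Δṽ(x) = x_{n+4}³·|x + e_{n+4}|^{−n−4} for all x ∈ ℝ^{n+4}₊, ṽ(x) = 0 whenever x_{n+4} = 0, and ṽ(x) → 0 as |x| → ∞. Then ṽ(x) ≥ (1/(2(n+2))) · h₁(x_{n+4}) · |x + e_{n+4}|^{−n−2} ≥ 0 for every x with x_{n+4} ≥ 0. -/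

import Mathlib

/-!
The bound is a maximum-principle comparison. Write `s = x_{n+4}`, `z = x + e_{n+4}`,
`c = 1 / (2(n+2))` and let `w = c h₁(s) |z|^{-(n+2)}` be the claimed lower bound. As `|z|^{-(n+2)}`
is harmonic in dimension `n + 4` and `h₁'(s) = s³ / (1+s)`,
`-Δw = s³ |z|^{-(n+4)} - c h₁''(s) |z|^{-(n+2)}`, and `h₁''(s) > 0` for `s > 0`. Hence
`Δ(v - w) < 0` strictly, so `v - w` has no interior local minimum. It vanishes on the boundary, and
when `n ≥ 2` it tends to zero at infinity (`w = O(|x|^{1-n})`), so it cannot be negative.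

When `n = 1` the function `w` does not decay, but neither can `v`, so the hypotheses are
contradictory (`not_decay`): the right-hand side `s³ |z|^{-5}` is of order `R^{-2}` on the ball of
radius `R` about `2R e₅`, and comparison with a paraboloid there shows that the oscillation of `v`
on that ball is bounded below independently of `R`.

The interior step is `sum_le_laplacian_of_isLocalMin`, the second derivative test along coordinate
lines, so that only one-variable derivatives of the comparison functions are needed.
-/

open Set

/-- The Euclidean Laplacian `Δf = Σᵢ ∂²f/∂xᵢ²`. -/
noncomputable def laplacian {m : ℕ} (f : EuclideanSpace ℝ (Fin m) → ℝ)
    (x : EuclideanSpace ℝ (Fin m)) : ℝ :=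
  ∑ i : Fin m, fderiv ℝ (fun y => fderiv ℝ f y (EuclideanSpace.single i 1)) x
    (EuclideanSpace.single i 1)

/-- `h₁(s) = (1+s)³/3 − 3(1+s)²/2 + 3(1+s) − log(1+s) − 11/6`. -/
noncomputable def h₁ (s : ℝ) : ℝ :=
  (1 + s) ^ 3 / 3 - 3 * (1 + s) ^ 2 / 2 + 3 * (1 + s) - Real.log (1 + s) - 11 / 6


open Filter Topology

/-! ### Second derivative test along coordinate lines -/

/-- Second-order necessary condition for a local minimum in one variable. -/
lemma nonneg_of_isLocalMin {φ φ' : ℝ → ℝ} {b : ℝ}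
    (h1 : ∀ᶠ t in 𝓝 (0 : ℝ), HasDerivAt φ (φ' t) t) (h2 : HasDerivAt φ' b 0)
    (hmin : IsLocalMin φ 0) : 0 ≤ b := by
  by_contra! hb
  have hd : deriv φ =ᶠ[𝓝 0] φ' := h1.mono fun t ht => ht.deriv
  have hdd : deriv (deriv φ) 0 = b := by rw [hd.deriv_eq, h2.deriv]
  -- A negative second derivative makes `0` a local maximum too, so `φ` is locally constant.
  have hmax : IsLocalMax φ 0 :=
    isLocalMax_of_deriv_deriv_neg (by rw [hdd]; exact hb) hmin.deriv_eq_zero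
      h1.self_of_nhds.continuousAt
  have hc : φ =ᶠ[𝓝 0] fun _ => φ 0 := by
    filter_upwards [hmin, hmax] with t h3 h4 using le_antisymm h4 h3
  have h0 : deriv (deriv φ) 0 = 0 := by
    rw [hc.deriv.deriv_eq]; simp
  linarith

/-- If `v - w` has a local minimum at `x`, then `Δw ≤ Δv` there, where `Δw` is given by the second
derivatives `w2 i` of `w` along the coordinate lines through `x`. -/
lemma sum_le_laplacian_of_isLocalMin {m : ℕ} {v w : EuclideanSpace ℝ (Fin m) → ℝ}
    {x : EuclideanSpace ℝ (Fin m)} (hv : ContDiffAt ℝ 2 v x)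
    (w1 : Fin m → ℝ → ℝ) (w2 : Fin m → ℝ)
    (hw1 : ∀ i, ∀ᶠ t in 𝓝 (0 : ℝ),
      HasDerivAt (fun t : ℝ => w (x + t • EuclideanSpace.single i 1)) (w1 i t) t)
    (hw2 : ∀ i, HasDerivAt (w1 i) (w2 i) 0)
    (hmin : IsLocalMin (fun y => v y - w y) x) :
    ∑ i, w2 i ≤ laplacian v x := by
  unfold laplacian
  refine Finset.sum_le_sum fun i _ => ?_
  set e : EuclideanSpace ℝ (Fin m) := EuclideanSpace.single i 1 with he
  have hline : ∀ t : ℝ, HasDerivAt (fun t : ℝ => x + t • e) e t := fun t => by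
    simpa using ((hasDerivAt_id t).smul_const e).const_add x
  have htend : Tendsto (fun t : ℝ => x + t • e) (𝓝 0) (𝓝 x) := by
    simpa [ContinuousAt] using (hline 0).continuousAt
  have hdiff : ∀ᶠ y in 𝓝 x, DifferentiableAt ℝ v y := by
    filter_upwards [hv.eventually (by simp)] with y hy using hy.differentiableAt (by simp)
  have hv1 : ∀ᶠ t in 𝓝 (0 : ℝ),
      HasDerivAt (fun t : ℝ => v (x + t • e)) (fderiv ℝ v (x + t • e) e) t := by
    filter_upwards [htend.eventually hdiff] with t ht
    exact ht.hasFDerivAt.comp_hasDerivAt t (hline t)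
  have hv2 : HasDerivAt (fun t : ℝ => fderiv ℝ v (x + t • e) e)
      (fderiv ℝ (fun y => fderiv ℝ v y e) x e) 0 := by
    have hD : DifferentiableAt ℝ (fun y => fderiv ℝ v y e) x :=
      ((hv.fderiv_right (m := 1) (by norm_num)).differentiableAt (by simp)).clm_apply
        (differentiableAt_const e)
    have hx : x = x + (0 : ℝ) • e := by simp
    have hD' := hD.hasFDerivAt
    rw [hx] at hD'
    have := hD'.comp_hasDerivAt (0 : ℝ) (hline 0)
    rw [← hx] at this
    exact this
  have hmin' : IsLocalMin (fun t : ℝ => v (x + t • e) - w (x + t • e)) 0 := by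
    have := htend.eventually hmin
    filter_upwards [this] with t ht
    simpa using ht
  have := nonneg_of_isLocalMin
    (φ' := fun t => fderiv ℝ v (x + t • e) e - w1 i t)
    (by filter_upwards [hv1, hw1 i] with t h1 h2 using h1.sub h2) (hv2.sub (hw2 i)) hmin'
  linarith

lemma norm_line_sq {m : ℕ} (z : EuclideanSpace ℝ (Fin m)) (i : Fin m) (t : ℝ) :
    ‖z + t • EuclideanSpace.single i (1 : ℝ)‖ ^ 2 = ‖z‖ ^ 2 + 2 * t * z i + t ^ 2 := by
  rw [norm_add_sq_real, real_inner_smul_right, EuclideanSpace.inner_single_right, norm_smul]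
  simp
  ring

/-! ### The profile `h₁` -/

lemma hasDerivAt_h₁ {s : ℝ} (hs : 0 ≤ s) : HasDerivAt h₁ (s ^ 3 / (1 + s)) s := by
  have h : HasDerivAt (fun s : ℝ => 1 + s) 1 s := by
    simpa using (hasDerivAt_id s).const_add 1
  have h1 : (1 + s) ≠ 0 := by positivity
  have := ((((((h.pow 3).div_const 3).sub (((h.pow 2).const_mul 3).div_const 2)).add
    (h.const_mul 3)).sub (h.log h1)).sub_const (11 / 6))
  refine this.congr_deriv ?_
  push_cast
  field_simp
  ring

lemma hasDerivAt_deriv_h₁ {s : ℝ} (hs : 0 ≤ s) :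
    HasDerivAt (fun s : ℝ => s ^ 3 / (1 + s)) (s ^ 2 * (3 + 2 * s) / (1 + s) ^ 2) s := by
  have h : HasDerivAt (fun s : ℝ => 1 + s) 1 s := by
    simpa using (hasDerivAt_id s).const_add 1
  have h1 : (1 + s) ≠ 0 := by positivity
  have := ((hasDerivAt_id s).pow 3).div h h1
  refine this.congr_deriv ?_
  simp
  field_simp
  ring

lemma h₁_zero : h₁ 0 = 0 := by
  norm_num [h₁]

lemma h₁_nonneg {s : ℝ} (hs : 0 ≤ s) : 0 ≤ h₁ s := by
  have hmono : MonotoneOn h₁ (Ici 0) := by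
    refine monotoneOn_of_deriv_nonneg (convex_Ici 0)
      (fun t ht => (hasDerivAt_h₁ ht).continuousAt.continuousWithinAt) ?_ ?_
    · intro t ht
      exact (hasDerivAt_h₁ (interior_subset ht)).differentiableAt.differentiableWithinAt
    · intro t ht
      have ht : 0 ≤ t := interior_subset (s := Ici (0 : ℝ)) ht
      rw [(hasDerivAt_h₁ ht).deriv]
      positivity
  have := hmono (mem_Ici.2 le_rfl) (mem_Ici.2 hs) hs
  rwa [h₁_zero] at this

lemma h₁_le {s : ℝ} (hs : 0 ≤ s) : h₁ s ≤ 4 * (1 + s) ^ 3 := by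
  have := Real.log_nonneg (x := 1 + s) (by linarith)
  unfold h₁
  nlinarith [pow_nonneg hs 2, pow_nonneg hs 3]

/-! ### The barrier is a strict subsolution -/

/-- Second derivative at `0` of the barrier along a coordinate line, where `|z + t eᵢ|²` is
`A + 2 t b + t²`, and `d` is `1` or `0` according to whether the line is vertical. -/
lemma hasDerivAt_barrier_line {s A b d p : ℝ} (hs : 0 < s) (hA : 0 < A) :
    ∃ w1 : ℝ → ℝ,
      (∀ᶠ t in 𝓝 (0 : ℝ), HasDerivAt
        (fun t : ℝ => h₁ (s + t * d) * (A + 2 * t * b + t ^ 2) ^ p) (w1 t) t) ∧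
      HasDerivAt w1
        (s ^ 2 * (3 + 2 * s) / (1 + s) ^ 2 * d ^ 2 * A ^ p
          + 4 * p * (s ^ 3 / (1 + s)) * (d * b) * A ^ (p - 1)
          + h₁ s * (4 * p * (p - 1) * b ^ 2 * A ^ (p - 2) + 2 * p * A ^ (p - 1))) 0 := by
  have hl : ∀ t : ℝ, HasDerivAt (fun t : ℝ => s + t * d) d t := fun t => by
    simpa using ((hasDerivAt_id t).mul_const d).const_add s
  have hQ : ∀ t : ℝ, HasDerivAt (fun t : ℝ => A + 2 * t * b + t ^ 2) (2 * b + 2 * t) t :=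
    fun t => by
      have := ((((hasDerivAt_id t).const_mul 2).mul_const b).const_add A).add
        ((hasDerivAt_id t).pow 2)
      refine this.congr_deriv ?_
      simp
  have hL : ∀ t : ℝ, HasDerivAt (fun t : ℝ => 2 * b + 2 * t) 2 t := fun t => by
    simpa using ((hasDerivAt_id t).const_mul 2).const_add (2 * b)
  have e1 : ∀ᶠ t in 𝓝 (0 : ℝ), 0 < s + t * d :=
    (hl 0).continuousAt.eventually (lt_mem_nhds (by simpa using hs))
  have e2 : ∀ᶠ t in 𝓝 (0 : ℝ), 0 < A + 2 * t * b + t ^ 2 :=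
    (hQ 0).continuousAt.eventually (lt_mem_nhds (by simpa using hA))
  refine ⟨fun t => ((s + t * d) ^ 3 / (1 + (s + t * d)) * d) * (A + 2 * t * b + t ^ 2) ^ p
    + h₁ (s + t * d) * ((2 * b + 2 * t) * p * (A + 2 * t * b + t ^ 2) ^ (p - 1)), ?_, ?_⟩
  · filter_upwards [e1, e2] with t h1 h2
    exact ((hasDerivAt_h₁ h1.le).comp t (hl t)).mul ((hQ t).rpow_const (Or.inl h2.ne'))
  · have q1 := e1.self_of_nhds
    have q2 := e2.self_of_nhds
    have k1 := ((hasDerivAt_deriv_h₁ q1.le).comp (0 : ℝ) (hl 0)).mul_const d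
    have k2 := (hQ 0).rpow_const (p := p) (Or.inl q2.ne')
    have k3 := (hQ 0).rpow_const (p := p - 1) (Or.inl q2.ne')
    have k4 := (hasDerivAt_h₁ q1.le).comp (0 : ℝ) (hl 0)
    have := (k1.mul k2).add (k4.mul (((hL 0).mul_const p).mul k3))
    refine this.congr_deriv ?_
    have hp : p - 1 - 1 = p - 2 := by ring
    simp [hp]
    ring

lemma norm_rpow_eq {m : ℕ} (z : EuclideanSpace ℝ (Fin m)) (q : ℝ) :
    ‖z‖ ^ q = (‖z‖ ^ 2) ^ (q / 2) := by
  rw [← Real.rpow_natCast, ← Real.rpow_mul (norm_nonneg z)]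
  congr 1
  push_cast
  ring

lemma isOpen_halfSpace {m : ℕ} (k : Fin m) (a : ℝ) :
    IsOpen {x : EuclideanSpace ℝ (Fin m) | a < x k} :=
  isOpen_lt continuous_const (by fun_prop)

lemma one_add_le_norm {m : ℕ} (k : Fin m) (x : EuclideanSpace ℝ (Fin m)) :
    1 + x k ≤ ‖x + EuclideanSpace.single k (1 : ℝ)‖ := by
  have := (le_abs_self _).trans
    (PiLp.norm_apply_le (x + EuclideanSpace.single k (1 : ℝ)) k)
  simp at this
  linarith

/-- The barrier is a strict subsolution: `v - w` has no local minimum inside the half-space. -/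
lemma not_isLocalMin_sub_barrier {n : ℕ} {v : EuclideanSpace ℝ (Fin (n + 4)) → ℝ}
    (k : Fin (n + 4)) {x : EuclideanSpace ℝ (Fin (n + 4))} (hx : 0 < x k)
    (hv : ContDiffAt ℝ 2 v x)
    (hpde : -laplacian v x = (x k) ^ 3
      * ‖x + EuclideanSpace.single k (1 : ℝ)‖ ^ (-(n : ℝ) - 4)) :
    ¬ IsLocalMin (fun y => v y - 1 / (2 * ((n : ℝ) + 2)) * h₁ (y k)
          * ‖y + EuclideanSpace.single k (1 : ℝ)‖ ^ (-(n : ℝ) - 2)) x := by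
  intro hmin
  set z := x + EuclideanSpace.single k (1 : ℝ) with hz
  set s := x k with hs
  set p : ℝ := (-(n : ℝ) - 2) / 2 with hp
  set c : ℝ := 1 / (2 * ((n : ℝ) + 2)) with hc
  set A := ‖z‖ ^ 2 with hA
  have hz1 : 1 + s ≤ ‖z‖ := one_add_le_norm k x
  have hApos : 0 < A := by
    have : 0 < ‖z‖ := by linarith
    positivity
  have hzk : z k = 1 + s := by simp [hz, hs]; ring
  choose w1 hw1 hw2 using fun i : Fin (n + 4) =>
    hasDerivAt_barrier_line (s := s) (A := A) (b := z i) (d := if i = k then 1 else 0) (p := p)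
      hx hApos
  have key := sum_le_laplacian_of_isLocalMin hv (fun i t => c * w1 i t) _
    (fun i => ?_) (fun i => (hw2 i).const_mul c) hmin
  · have hsum : ∑ i, z i ^ 2 = A := by
      rw [hA, EuclideanSpace.norm_sq_eq]; simp
    have hAA : A * A ^ (p - 2) = A ^ (p - 1) := by
      rw [mul_comm, ← Real.rpow_add_one hApos.ne']; congr 1; ring
    have hpde' : laplacian v x = -(s ^ 3 * A ^ (p - 1)) := by
      rw [← neg_eq_iff_eq_neg, hpde, norm_rpow_eq]
      congr 2
      rw [hp]; ring
    have hd : ∀ i : Fin (n + 4), (if i = k then (1 : ℝ) else 0) ^ 2 = if i = k then 1 else 0 := by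
      intro i; split_ifs <;> simp
    have hpos : 0 < c * (s ^ 2 * (3 + 2 * s) / (1 + s) ^ 2 * A ^ p) := by positivity
    -- The terms in `h₁ s` cancel because `|z|^(2p)` is harmonic: `4p(p-1) + 2p(n+4) = 0`.
    have hcomp : ∑ i, c * (s ^ 2 * (3 + 2 * s) / (1 + s) ^ 2
            * (if i = k then (1 : ℝ) else 0) ^ 2 * A ^ p
          + 4 * p * (s ^ 3 / (1 + s)) * ((if i = k then (1 : ℝ) else 0) * z i) * A ^ (p - 1)
          + h₁ s * (4 * p * (p - 1) * (z i) ^ 2 * A ^ (p - 2) + 2 * p * A ^ (p - 1)))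
        = c * (s ^ 2 * (3 + 2 * s) / (1 + s) ^ 2 * A ^ p) - s ^ 3 * A ^ (p - 1) := by
      simp only [hd]
      rw [← Finset.mul_sum, Finset.sum_add_distrib, Finset.sum_add_distrib, ← Finset.mul_sum,
        Finset.sum_add_distrib, ← Finset.sum_mul, ← Finset.mul_sum, ← Finset.sum_mul,
        ← Finset.mul_sum, ← Finset.sum_mul, ← Finset.mul_sum, hsum]
      have hs0 : 1 + s ≠ 0 := by positivity
      simp only [ite_mul, one_mul, zero_mul, Finset.sum_ite_eq', Finset.mem_univ, if_true,
        Finset.sum_const, Finset.card_univ, Fintype.card_fin, nsmul_eq_mul, hzk]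
      rw [mul_assoc (4 * p * (p - 1)) A, hAA, hp, hc]
      push_cast
      field_simp
      ring
    rw [hcomp, hpde'] at key
    linarith
  · filter_upwards [hw1 i] with t ht
    have := ht.const_mul c
    refine this.congr_of_eventuallyEq (Eventually.of_forall fun u => ?_)
    have h1 : x + u • EuclideanSpace.single i (1 : ℝ) + EuclideanSpace.single k (1 : ℝ)
        = z + u • EuclideanSpace.single i (1 : ℝ) := by rw [hz]; abel
    have h2 : (x + u • EuclideanSpace.single i (1 : ℝ)) k = s + u * (if i = k then 1 else 0) := by
      simp [hs, eq_comm]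
    simp only [h1, h2]
    rw [norm_rpow_eq, norm_line_sq]
    ring

/-! ### Behaviour at infinity -/

/-- In dimension five (`n = 1`) no solution tends to zero at infinity. -/
lemma not_decay {v : EuclideanSpace ℝ (Fin (1 + 4)) → ℝ} (k : Fin (1 + 4))
    (hvC2 : ContDiffOn ℝ 2 v {x | 0 < x k})
    (hpde : ∀ x : EuclideanSpace ℝ (Fin (1 + 4)), 0 < x k →
      -laplacian v x = (x k) ^ 3 * ‖x + EuclideanSpace.single k (1 : ℝ)‖ ^ (-((1 : ℕ) : ℝ) - 4))
    (hdecay : ∀ ε > (0 : ℝ), ∃ R : ℝ, ∀ x : EuclideanSpace ℝ (Fin (1 + 4)),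
      0 ≤ x k → R ≤ ‖x‖ → |v x| < ε) : False := by
  -- The oscillation of `v` on the ball below is at least `1 / 20480`.
  obtain ⟨R₀, hR₀⟩ := hdecay (1 / 40960) (by norm_num)
  obtain ⟨R, hR0, hR1⟩ : ∃ R : ℝ, R₀ ≤ R ∧ 1 ≤ R := ⟨max R₀ 1, le_max_left _ _, le_max_right _ _⟩
  have hRpos : 0 < R := by linarith
  set o : EuclideanSpace ℝ (Fin (1 + 4)) := EuclideanSpace.single k (2 * R) with ho
  set a : ℝ := 1 / (20480 * R ^ 2) with ha
  have hcoord : ∀ x ∈ Metric.closedBall o R, R ≤ x k := by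
    intro x hx
    rw [mem_closedBall_iff_norm] at hx
    have := (neg_le_abs _).trans ((PiLp.norm_apply_le (x - o) k).trans hx)
    simp [ho] at this
    linarith
  have hsmall : ∀ x ∈ Metric.closedBall o R, |v x| < 1 / 40960 := by
    intro x hx
    have h1 := hcoord x hx
    refine hR₀ x (by linarith) ?_
    have := (le_abs_self _).trans (PiLp.norm_apply_le x k)
    linarith
  have hcont : ContinuousOn (fun y => v y - (-(a * ‖y - o‖ ^ 2))) (Metric.closedBall o R) := by
    refine ContinuousOn.sub (hvC2.continuousOn.mono fun x hx => ?_) (by fun_prop)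
    exact hRpos.trans_le (hcoord x hx)
  obtain ⟨x, hx, hxmin⟩ := (isCompact_closedBall o R).exists_isMinOn
    ⟨o, Metric.mem_closedBall_self hRpos.le⟩ hcont
  have hxk := hcoord x hx
  have hxk0 : 0 < x k := by linarith
  rcases (Metric.mem_closedBall.1 hx).lt_or_eq with hlt | heq
  · have hloc : IsLocalMin (fun y => v y - (-(a * ‖y - o‖ ^ 2))) x :=
      hxmin.isLocalMin (Filter.mem_of_superset (Metric.isOpen_ball.mem_nhds
        (Metric.mem_ball.2 hlt)) Metric.ball_subset_closedBall)
    have key := sum_le_laplacian_of_isLocalMin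
      (hvC2.contDiffAt ((isOpen_halfSpace k 0).mem_nhds hxk0))
      (fun i t => -(a * (2 * (x - o) i + 2 * t))) (fun i => -(a * 2)) (fun i => ?_) (fun i => ?_)
      hloc
    · have hp := hpde x hxk0
      have hn1 := one_add_le_norm k x
      have hn2 : ‖x + EuclideanSpace.single k (1 : ℝ)‖ ≤ 4 * R := by
        have e1 : x + EuclideanSpace.single k (1 : ℝ)
          = (x - o) + (o + EuclideanSpace.single k (1 : ℝ)) := by abel
        have e2 := norm_add_le (x - o) (o + EuclideanSpace.single k (1 : ℝ))
        have e3 := norm_add_le o (EuclideanSpace.single k (1 : ℝ))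
        have e4 : ‖o‖ = 2 * R := by simp [ho, abs_of_pos hRpos]
        have e5 : ‖x - o‖ ≤ R := by rw [← dist_eq_norm]; exact hx
        have e6 : ‖(EuclideanSpace.single k (1 : ℝ) : EuclideanSpace ℝ (Fin (1 + 4)))‖ = 1 := by
          simp
        rw [e1]; linarith
      set r := ‖x + EuclideanSpace.single k (1 : ℝ)‖
      have hr : 0 < r := by linarith
      have he : r ^ (-((1 : ℕ) : ℝ) - 4) = (r ^ 5)⁻¹ := by
        rw [← Real.rpow_natCast, ← Real.rpow_neg hr.le]; norm_num
      have hlow : 1 / (1024 * R ^ 2) ≤ (x k) ^ 3 * r ^ (-((1 : ℕ) : ℝ) - 4) := by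
        rw [he]
        calc 1 / (1024 * R ^ 2) = R ^ 3 * ((4 * R) ^ 5)⁻¹ := by field_simp; norm_num
          _ ≤ _ := by gcongr
      have h10 : (1 : ℝ) / (1024 * R ^ 2) = 20 * a := by rw [ha]; field_simp; norm_num
      have hapos : 0 < a := by positivity
      simp at key
      rw [← hp, h10] at hlow
      linarith
    · refine Eventually.of_forall fun t => ?_
      have hQ : HasDerivAt (fun t : ℝ => -(a * (‖x - o‖ ^ 2 + 2 * t * (x - o) i + t ^ 2)))
          (-(a * (2 * (x - o) i + 2 * t))) t := by
        have := (((((hasDerivAt_id t).const_mul 2).mul_const ((x - o) i)).const_add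
          (‖x - o‖ ^ 2)).add ((hasDerivAt_id t).pow 2)).const_mul a |>.neg
        refine this.congr_deriv ?_
        simp
      refine hQ.congr_of_eventuallyEq (Eventually.of_forall fun u => ?_)
      have h1 : x + u • EuclideanSpace.single i (1 : ℝ) - o
        = (x - o) + u • EuclideanSpace.single i (1 : ℝ) := by abel
      simp only [h1, norm_line_sq]
    · have := ((((hasDerivAt_id (0 : ℝ)).const_mul 2).const_add (2 * (x - o) i)).const_mul a).neg
      exact this.congr_deriv (by simp)
  · have h1 := hxmin (Metric.mem_closedBall_self hRpos.le)
    have h2 := abs_lt.1 (hsmall x hx)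
    have h3 := abs_lt.1 (hsmall o (Metric.mem_closedBall_self hRpos.le))
    rw [dist_eq_norm] at heq
    have h4 : a * R ^ 2 = 1 / 20480 := by rw [ha]; field_simp
    simp [heq, h4] at h1
    linarith [h2.1, h3.2]

/-- For `n ≥ 2` the barrier is at most `1 / |x + e_{n+4}|`, hence decays. -/
lemma barrier_le {n : ℕ} (hn : 2 ≤ n) (k : Fin (n + 4)) {x : EuclideanSpace ℝ (Fin (n + 4))}
    (hx : 0 ≤ x k) :
    1 / (2 * ((n : ℝ) + 2)) * h₁ (x k)
      * ‖x + EuclideanSpace.single k (1 : ℝ)‖ ^ (-(n : ℝ) - 2)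
      ≤ ‖x + EuclideanSpace.single k (1 : ℝ)‖⁻¹ := by
  have h1 := one_add_le_norm k x
  set r := ‖x + EuclideanSpace.single k (1 : ℝ)‖
  have hr : 1 ≤ r := by linarith
  have hr0 : 0 < r := by linarith
  have hn' : (2 : ℝ) ≤ n := by exact_mod_cast hn
  have hc : 1 / (2 * ((n : ℝ) + 2)) ≤ 1 / 4 := by
    apply one_div_le_one_div_of_le <;> linarith
  have hh : h₁ (x k) ≤ 4 * r ^ 3 := (h₁_le hx).trans (by gcongr)
  have hp : r ^ (-(n : ℝ) - 2) ≤ (r ^ 4)⁻¹ := by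
    rw [← Real.rpow_natCast, ← Real.rpow_neg hr0.le]
    exact Real.rpow_le_rpow_of_exponent_le hr (by push_cast; linarith)
  calc _ ≤ 1 / 4 * (4 * r ^ 3) * (r ^ 4)⁻¹ := by
        have := h₁_nonneg hx
        gcongr
    _ = r⁻¹ := by field_simp

/-! ### Comparison on the half-space -/

/-- Lower bound for the solution `ṽ` of `−Δṽ = x_{n+4}³|x+e_{n+4}|^{−n−4}` in `ℝ^{n+4}₊`
with zero boundary values and decay at infinity:
`ṽ(x) ≥ (1/(2(n+2))) h₁(x_{n+4}) |x+e_{n+4}|^{−n−2} ≥ 0` on the closed half-space. -/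
theorem v2_lower_bound (n : ℕ) (hn : 1 ≤ n)
    (v : EuclideanSpace ℝ (Fin (n + 4)) → ℝ)
    (hvcont : ContinuousOn v {x : EuclideanSpace ℝ (Fin (n + 4)) | 0 ≤ x ⟨n + 3, by omega⟩})
    (hvC2 : ContDiffOn ℝ 2 v {x : EuclideanSpace ℝ (Fin (n + 4)) | 0 < x ⟨n + 3, by omega⟩})
    (hpde : ∀ x : EuclideanSpace ℝ (Fin (n + 4)), 0 < x ⟨n + 3, by omega⟩ →
      -laplacian v x
        = (x ⟨n + 3, by omega⟩) ^ 3
            * ‖x + EuclideanSpace.single (⟨n + 3, by omega⟩ : Fin (n + 4)) (1 : ℝ)‖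
                ^ (-(n : ℝ) - 4))
    (hbdry : ∀ x : EuclideanSpace ℝ (Fin (n + 4)), x ⟨n + 3, by omega⟩ = 0 → v x = 0)
    (hdecay : ∀ ε > (0 : ℝ), ∃ R : ℝ, ∀ x : EuclideanSpace ℝ (Fin (n + 4)),
      0 ≤ x ⟨n + 3, by omega⟩ → R ≤ ‖x‖ → |v x| < ε) :
    ∀ x : EuclideanSpace ℝ (Fin (n + 4)), 0 ≤ x ⟨n + 3, by omega⟩ →
      1 / (2 * ((n : ℝ) + 2)) * h₁ (x ⟨n + 3, by omega⟩)
          * ‖x + EuclideanSpace.single (⟨n + 3, by omega⟩ : Fin (n + 4)) (1 : ℝ)‖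
              ^ (-(n : ℝ) - 2) ≤ v x
      ∧ 0 ≤ 1 / (2 * ((n : ℝ) + 2)) * h₁ (x ⟨n + 3, by omega⟩)
          * ‖x + EuclideanSpace.single (⟨n + 3, by omega⟩ : Fin (n + 4)) (1 : ℝ)‖
              ^ (-(n : ℝ) - 2) := by
  intro x₀ hx₀
  set k : Fin (n + 4) := ⟨n + 3, by omega⟩ with hk
  refine ⟨?_, mul_nonneg (mul_nonneg (by positivity) (h₁_nonneg hx₀)) (by positivity)⟩
  rcases hn.eq_or_lt with h1 | hn2
  · subst h1
    exact (not_decay k hvC2 hpde hdecay).elim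
  by_contra! hlt
  set w : EuclideanSpace ℝ (Fin (n + 4)) → ℝ := fun y => 1 / (2 * ((n : ℝ) + 2)) * h₁ (y k)
    * ‖y + EuclideanSpace.single k (1 : ℝ)‖ ^ (-(n : ℝ) - 2) with hw
  obtain ⟨d, hd⟩ : ∃ d, d = w x₀ - v x₀ := ⟨_, rfl⟩
  have hdpos : 0 < d := by rw [hd]; exact sub_pos.2 hlt
  obtain ⟨R₀, hR₀⟩ := hdecay (d / 2) (by positivity)
  -- For `‖x‖ ≥ R` in the half-space both `v` and `w` are at most `d / 2` in absolute value.
  obtain ⟨R, hR1, hR2, hR3⟩ : ∃ R : ℝ, R₀ ≤ R ∧ 1 + 2 / d ≤ R ∧ ‖x₀‖ ≤ R :=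
    ⟨max R₀ (max (1 + 2 / d) ‖x₀‖), by simp, by simp, by simp⟩
  have hclosed : IsClosed {x : EuclideanSpace ℝ (Fin (n + 4)) | 0 ≤ x k} :=
    isClosed_le continuous_const (by fun_prop)
  have hK := (isCompact_closedBall (0 : EuclideanSpace ℝ (Fin (n + 4))) R).inter_right hclosed
  have hwcont : ContinuousOn w {x | 0 ≤ x k} := by
    have c1 : ContinuousOn h₁ (Ici 0) :=
      fun t ht => (hasDerivAt_h₁ ht).continuousAt.continuousWithinAt
    have c2 : ContinuousOn (fun y : EuclideanSpace ℝ (Fin (n + 4)) => h₁ (y k)) {x | 0 ≤ x k} :=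
      c1.comp (by fun_prop) (fun y hy => hy)
    refine (continuousOn_const.mul c2).mul (ContinuousOn.rpow_const (by fun_prop) ?_)
    intro y hy
    have := one_add_le_norm k y
    have hy : 0 ≤ y k := hy
    exact Or.inl (by linarith : (0 : ℝ) < _).ne'
  obtain ⟨x, ⟨hxR, hxk⟩, hxmin⟩ := hK.exists_isMinOn ⟨x₀, by simpa using hR3, hx₀⟩
    ((hvcont.sub hwcont).mono inter_subset_right)
  have hxd : v x - w x ≤ -d := by
    have : v x - w x ≤ v x₀ - w x₀ := hxmin ⟨by simpa using hR3, hx₀⟩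
    linarith
  have hxk' : 0 < x k := by
    refine lt_of_le_of_ne hxk fun h => ?_
    have e1 := hbdry x h.symm
    have e2 : w x = 0 := by simp only [hw]; rw [← h, h₁_zero]; ring
    linarith
  have hxlt : ‖x‖ < R := by
    by_contra! hge
    have e1 := abs_lt.1 (hR₀ x hxk (hR1.trans hge))
    have e2 : w x ≤ _ := barrier_le hn2 k hxk
    have e3 : 2 / d ≤ ‖x + EuclideanSpace.single k (1 : ℝ)‖ := by
      have := norm_sub_le (x + EuclideanSpace.single k (1 : ℝ)) (EuclideanSpace.single k (1 : ℝ))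
      simp at this
      linarith
    have e4 : ‖x + EuclideanSpace.single k (1 : ℝ)‖⁻¹ ≤ d / 2 := by
      rw [← inv_div]
      exact inv_anti₀ (by positivity) e3
    linarith [e1.1]
  refine absurd ?_ (not_isLocalMin_sub_barrier k hxk'
    (hvC2.contDiffAt ((isOpen_halfSpace k 0).mem_nhds hxk')) (hpde x hxk'))
  refine hxmin.isLocalMin ?_
  filter_upwards [Metric.isOpen_ball.mem_nhds (mem_ball_zero_iff.2 hxlt),
    (isOpen_halfSpace k 0).mem_nhds hxk'] with y hy1 hy2
  exact ⟨Metric.ball_subset_closedBall hy1, le_of_lt hy2⟩
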